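/- arXiv:1610.01377 — 4 statements merged into one kernel-verified Lean document; each statement's English description precedes it below -/
import Mathlib

section
/- Let 1 ≤ d < r and let M be a representation of Γ_r. Then M has constant d-socle rank if and only if there exists c ∈ ℕ₀ such that dim_k Hom(X_U, M) = c for all U ∈ Gr_{d,r}. -/
open Module LinearMap

universe u

/-- A finite-dimensional representation of the `r`-Kronecker quiver `Γ_r` over `k`:
two finite-dimensional `k`-vector spaces `M₁`, `M₂` and `r` linear maps `M₁ → M₂`. -/
structure KRep (k : Type u) [Field k] (r : ℕ) : Type (u + 1) where
  V1 : Type u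
  V2 : Type u
  [addV1 : AddCommGroup V1]
  [addV2 : AddCommGroup V2]
  [modV1 : Module k V1]
  [modV2 : Module k V2]
  [finV1 : FiniteDimensional k V1]
  [finV2 : FiniteDimensional k V2]
  f : Fin r → V1 →ₗ[k] V2

attribute [instance] KRep.addV1 KRep.addV2 KRep.modV1 KRep.modV2 KRep.finV1 KRep.finV2

variable {k : Type u} [Field k] {r : ℕ}

/-- For `α ∈ k^r`, the operator `x^M_α = ∑ i, αᵢ • M(γᵢ) : M₁ → M₂`. -/
def KRep.x (M : KRep k r) (α : Fin r → k) : M.V1 →ₗ[k] M.V2 :=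
  ∑ i, α i • M.f i

/-- The space `Hom(M, N)` of morphisms of representations, as a `k`-submodule of the
pairs of linear maps `(f₁ : M₁ → N₁, f₂ : M₂ → N₂)`; membership is the condition
`f₂ ∘ M(γᵢ) = N(γᵢ) ∘ f₁` for all `i`. -/
def KHom (M N : KRep k r) : Submodule k ((M.V1 →ₗ[k] N.V1) × (M.V2 →ₗ[k] N.V2)) where
  carrier := {p | ∀ i, p.2 ∘ₗ M.f i = N.f i ∘ₗ p.1}
  add_mem' := by
    intro a b ha hb i
    simp only [Prod.snd_add, Prod.fst_add, LinearMap.add_comp, LinearMap.comp_add, ha i, hb i]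
  zero_mem' := by intro i; simp
  smul_mem' := by
    intro c a ha i
    simp only [Prod.smul_snd, Prod.smul_fst, LinearMap.smul_comp, LinearMap.comp_smul, ha i]

/-- The representation `X_U` attached to a subspace `U ⊆ k^r`:
`(X_U)₁ = k`, `(X_U)₂ = k^r/U`, and `X_U(γᵢ)(c) = c · (eᵢ + U)`. -/
def XU (U : Submodule k (Fin r → k)) : KRep k r where
  V1 := k
  V2 := (Fin r → k) ⧸ U
  f := fun i => LinearMap.toSpanSingleton k _ (Submodule.Quotient.mk (Pi.single i 1))

/-- The `M₁`-part of the socle: `{m ∈ M₁ : x^M_u(m) = 0 for all u ∈ U}`. -/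
def KRep.socKer (M : KRep k r) (U : Submodule k (Fin r → k)) : Submodule k M.V1 :=
  ⨅ u ∈ U, LinearMap.ker (M.x u)

/-- `Soc_U(M) = {m ∈ M₁ : x^M_u(m) = 0 ∀ u ∈ U} ⊕ M₂`, as a subspace of `M₁ ⊕ M₂`. -/
def KRep.soc (M : KRep k r) (U : Submodule k (Fin r → k)) : Submodule k (M.V1 × M.V2) :=
  (M.socKer U).prod ⊤

/-- `Rad_U(M) = ∑_{u ∈ U} x^M_u(M₁) ⊆ M₂`. -/
def KRep.rad (M : KRep k r) (U : Submodule k (Fin r → k)) : Submodule k M.V2 :=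
  ⨆ u ∈ U, LinearMap.range (M.x u)

/-- Direct sum of two representations. -/
def KRep.sum (M N : KRep k r) : KRep k r where
  V1 := M.V1 × N.V1
  V2 := M.V2 × N.V2
  f := fun i => (M.f i).prodMap (N.f i)

/-- Isomorphism of representations. -/
def KIso (M N : KRep k r) : Prop :=
  ∃ (e1 : M.V1 ≃ₗ[k] N.V1) (e2 : M.V2 ≃ₗ[k] N.V2),
    ∀ i, (e2 : M.V2 →ₗ[k] N.V2) ∘ₗ M.f i = N.f i ∘ₗ (e1 : M.V1 →ₗ[k] N.V1)

/-- A representation is nonzero if its dimension vector is not `(0,0)`. -/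
def KRep.Nonzero (M : KRep k r) : Prop :=
  finrank k M.V1 ≠ 0 ∨ finrank k M.V2 ≠ 0

/-- A representation is indecomposable if it is nonzero and not isomorphic to a direct
sum of two nonzero representations. -/
def KRep.Indecomposable (M : KRep k r) : Prop :=
  M.Nonzero ∧ ∀ A B : KRep k r, A.Nonzero → B.Nonzero → ¬ KIso M (A.sum B)

/-- A representation is simple if its dimension vector is `(1,0)` or `(0,1)`. -/
def KRep.IsSimple (M : KRep k r) : Prop :=
  (finrank k M.V1 = 1 ∧ finrank k M.V2 = 0) ∨ (finrank k M.V1 = 0 ∧ finrank k M.V2 = 1)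

/-- `M` has constant `d`-socle rank: `dim_k Soc_U(M)` is independent of `U ∈ Gr_{d,r}`. -/
def KRep.ConstSocRank (d : ℕ) (M : KRep k r) : Prop :=
  ∃ c : ℕ, ∀ U : Submodule k (Fin r → k), finrank k U = d → finrank k (M.soc U) = c

/-- `M` has the equal `d`-socle property: `Soc_U(M)` is independent of `U ∈ Gr_{d,r}`. -/
def KRep.ESP (d : ℕ) (M : KRep k r) : Prop :=
  ∀ U V : Submodule k (Fin r → k), finrank k U = d → finrank k V = d → M.soc U = M.soc V

/-- `M` has constant `d`-radical rank: `dim_k Rad_U(M)` is independent of `U ∈ Gr_{d,r}`. -/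
def KRep.ConstRadRank (d : ℕ) (M : KRep k r) : Prop :=
  ∃ c : ℕ, ∀ U : Submodule k (Fin r → k), finrank k U = d → finrank k (M.rad U) = c

/-- `M` has the equal `d`-radical property: `Rad_U(M)` is independent of `U ∈ Gr_{d,r}`. -/
def KRep.ERP (d : ℕ) (M : KRep k r) : Prop :=
  ∀ U V : Submodule k (Fin r → k), finrank k U = d → finrank k V = d → M.rad U = M.rad V

/-!
A morphism `X_U → M` is determined by the image `m ∈ M₁` of `1`: its second component must be
induced on `k^r/U` by `α ↦ x^M_α(m)`, and such an induced map exists exactly when `x^M_u(m) = 0` for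
all `u ∈ U`. Hence `Hom(X_U, M)` is the `M₁`-part of `Soc_U(M)`, and
`dim Soc_U(M) - dim Hom(X_U, M) = dim M₂` does not depend on `U`.
-/

/-- A product of submodules, as a submodule of the product, is the product of the underlying
modules; linear version of `AddSubmonoid.prodEquiv`. -/
def submoduleProdEquiv {R V W : Type*} [Semiring R] [AddCommMonoid V] [AddCommMonoid W]
    [Module R V] [Module R W] (p : Submodule R V) (q : Submodule R W) : p.prod q ≃ₗ[R] p × q where
  __ := p.toAddSubmonoid.prodEquiv q.toAddSubmonoid
  map_smul' _ _ := rfl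

namespace KRep

/-- The structure maps of `M` assembled into the linear map `α ↦ x^M_α`. -/
def xLinear (M : KRep k r) : (Fin r → k) →ₗ[k] M.V1 →ₗ[k] M.V2 :=
  Fintype.linearCombination k M.f

theorem xLinear_apply (M : KRep k r) (α : Fin r → k) : M.xLinear α = M.x α := rfl

theorem xLinear_single_one (M : KRep k r) (i : Fin r) : M.xLinear (Pi.single i 1) = M.f i := by
  rw [xLinear, Fintype.linearCombination_apply_single, one_smul]

theorem mem_socKer_iff_le_ker {M : KRep k r} {U : Submodule k (Fin r → k)} {m : M.V1} :
    m ∈ M.socKer U ↔ U ≤ ker (M.xLinear.flip m) := by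
  simp only [socKer, Submodule.mem_iInf, mem_ker, SetLike.le_def, flip_apply, xLinear_apply]

theorem finrank_soc (M : KRep k r) (U : Submodule k (Fin r → k)) :
    finrank k (M.soc U) = finrank k (M.socKer U) + finrank k M.V2 := by
  rw [soc, (submoduleProdEquiv _ _).finrank_eq, finrank_prod, finrank_top]

end KRep

section HomXU

variable {U : Submodule k (Fin r → k)} {M : KRep k r}

theorem mem_KHom_XU_iff {p : (k →ₗ[k] M.V1) × ((Fin r → k) ⧸ U →ₗ[k] M.V2)} :
    p ∈ KHom (XU U) M ↔ p.2 ∘ₗ U.mkQ = M.xLinear.flip (p.1 1) := by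
  calc p ∈ KHom (XU U) M
      ↔ ∀ i, p.2 ∘ₗ toSpanSingleton k _ (U.mkQ (Pi.single i 1)) = M.f i ∘ₗ p.1 := Iff.rfl
    _ ↔ ∀ i, p.2 (U.mkQ (Pi.single i 1)) = M.f i (p.1 1) := by
      refine forall_congr' fun i => ⟨fun h => ?_, fun h => ext_ring ?_⟩
      · simpa only [comp_apply, toSpanSingleton_apply_one] using LinearMap.congr_fun h 1
      · simpa only [comp_apply, toSpanSingleton_apply_one] using h
    _ ↔ ∀ i, (p.2 ∘ₗ U.mkQ) (Pi.single i 1) = M.xLinear.flip (p.1 1) (Pi.single i 1) := by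
      simp only [comp_apply, flip_apply, KRep.xLinear_single_one]
    _ ↔ p.2 ∘ₗ U.mkQ = M.xLinear.flip (p.1 1) :=
      ⟨fun h => pi_ext' fun i => ext_ring (h i), fun h _ => by rw [h]⟩

theorem apply_one_mem_socKer_of_mem_KHom_XU
    {p : (k →ₗ[k] M.V1) × ((Fin r → k) ⧸ U →ₗ[k] M.V2)} (hp : p ∈ KHom (XU U) M) :
    p.1 1 ∈ M.socKer U := by
  rw [KRep.mem_socKer_iff_le_ker, ← mem_KHom_XU_iff.mp hp]
  exact U.ker_mkQ.ge.trans (ker_le_ker_comp _ _)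

theorem toSpanSingleton_liftQ_mem_KHom_XU {m : M.V1} (hm : U ≤ ker (M.xLinear.flip m)) :
    (toSpanSingleton k M.V1 m, U.liftQ (M.xLinear.flip m) hm) ∈ KHom (XU U) M := by
  rw [mem_KHom_XU_iff, U.liftQ_mkQ, toSpanSingleton_apply_one]

variable (U M)

/-- Evaluation at `1 ∈ (X_U)₁`, identifying `Hom(X_U, M)` with the `M₁`-part of `Soc_U(M)`. -/
def homXUEquivSocKer : KHom (XU U) M ≃ₗ[k] M.socKer U where
  toFun p := ⟨p.1.1 (1 : k), apply_one_mem_socKer_of_mem_KHom_XU p.2⟩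
  map_add' _ _ := rfl
  map_smul' _ _ := rfl
  invFun m := ⟨_, toSpanSingleton_liftQ_mem_KHom_XU (KRep.mem_socKer_iff_le_ker.mp m.2)⟩
  left_inv p := by
    have fst_eq : toSpanSingleton k M.V1 (p.1.1 (1 : k)) = p.1.1 := ext_ring (one_smul k _)
    have snd_eq (h) : U.liftQ (M.xLinear.flip (p.1.1 (1 : k))) h = p.1.2 :=
      Submodule.linearMap_qext U <| (U.liftQ_mkQ _ h).trans (mem_KHom_XU_iff.mp p.2).symm
    exact Subtype.ext (Prod.ext fst_eq (snd_eq _))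
  right_inv m := Subtype.ext (one_smul k m.1)

theorem finrank_soc_eq_finrank_KHom_XU_add :
    finrank k (M.soc U) = finrank k (KHom (XU U) M) + finrank k M.V2 := by
  rw [M.finrank_soc, (homXUEquivSocKer U M).finrank_eq]

end HomXU

/-- For `1 ≤ d < r` and a representation `M` of `Γ_r`, `M` has constant
`d`-socle rank if and only if there is `c ∈ ℕ₀` with `dim_k Hom(X_U, M) = c` for all
`U ∈ Gr_{d,r}`. -/
theorem constSocRank_iff_dim_hom_const (d : ℕ) (hd : 1 ≤ d) (hdr : d < r) (M : KRep k r) :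
    KRep.ConstSocRank d M ↔
      ∃ c : ℕ, ∀ U : Submodule k (Fin r → k), finrank k U = d →
        finrank k (KHom (XU U) M) = c := by
  constructor
  · rintro ⟨c, hc⟩
    refine ⟨c - finrank k M.V2, fun U hU => ?_⟩
    rw [← hc U hU, finrank_soc_eq_finrank_KHom_XU_add, Nat.add_sub_cancel]
  · rintro ⟨c, hc⟩
    exact ⟨c + finrank k M.V2, fun U hU => by rw [finrank_soc_eq_finrank_KHom_XU_add, hc U hU]⟩
end

section
/- Let 1 ≤ c ≤ d < r and let M be an indecomposable representation of Γ_r with dimension vector (1, r−d). Then there exist an indecomposable representation N of Γ_r with dimension vector (1, r−c) and a surjective morphism π : N → M (i.e. both components π₁ and π₂ are surjective). -/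
open Module LinearMap

universe u

variable {k : Type u} [Field k] {r : ℕ}

/-!
Put `Rad(M) = ∑ᵢ im M(γᵢ)`. When `dim M₁ = 1`, indecomposability means `Rad(M) = M₂`: a complement
of `Rad(M)` in `M₂` splits off as a summand concentrated in the second vertex, and conversely the
condition `Rad = (-)₂` passes to direct summands and forces each nonzero one to be nonzero at the
first vertex, which a one-dimensional `M₁` allows only once.

If `m` spans `M₁`, then `α ↦ x^M_α(m)` is therefore a surjection `k^r → M₂`, whose kernel has
dimension `d`. A subspace `U` of that kernel of dimension `c` gives a representation `X_U` of
dimension vector `(1, r-c)` which is indecomposable by the same criterion, and the surjection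
factors through `k^r/U`.
-/

theorem exists_submodule_le_finrank_eq {R V : Type*} [Ring R] [StrongRankCondition R]
    [AddCommGroup V] [Module R V] (K : Submodule R V) {n : ℕ} (hn : n ≤ finrank R K) :
    ∃ U ≤ K, finrank R U = n := by
  have : Nontrivial R := nontrivial_of_invariantBasisNumber R
  obtain ⟨v, hv⟩ := exists_linearIndependent_of_le_finrank hn
  have hv' := hv.map' K.subtype K.ker_subtype
  refine ⟨Submodule.span R (Set.range (K.subtype ∘ v)), Submodule.span_le.2 ?_, ?_⟩
  · rintro _ ⟨i, rfl⟩
    exact (v i).2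
  · rw [finrank_span_eq_card hv', Fintype.card_fin]

theorem comp_x_of_mem_KHom {M N : KRep k r} {p : (M.V1 →ₗ[k] N.V1) × (M.V2 →ₗ[k] N.V2)}
    (hp : p ∈ KHom M N) (α : Fin r → k) : p.2 ∘ₗ M.x α = N.x α ∘ₗ p.1 := by
  ext m
  have hf (i : Fin r) : p.2 (M.f i m) = N.f i (p.1 m) := LinearMap.congr_fun (hp i) m
  simp [KRep.x, hf]

namespace KRep

theorem x_single (M : KRep k r) (i : Fin r) : M.x (Pi.single i 1) = M.f i := by
  simp [x, Pi.single_apply, ite_smul]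

theorem range_x_le_rad (M : KRep k r) {U : Submodule k (Fin r → k)} {α : Fin r → k}
    (hα : α ∈ U) : range (M.x α) ≤ M.rad U :=
  le_iSup₂_of_le α hα le_rfl

theorem map_rad_le {M N : KRep k r} {p : (M.V1 →ₗ[k] N.V1) × (M.V2 →ₗ[k] N.V2)}
    (hp : p ∈ KHom M N) (U : Submodule k (Fin r → k)) : (M.rad U).map p.2 ≤ N.rad U := by
  simp only [rad, Submodule.map_iSup]
  refine iSup₂_mono fun α _ ↦ ?_
  rw [← range_comp, comp_x_of_mem_KHom hp]
  exact range_comp_le_range _ _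

theorem rad_eq_top_of_surjective {M N : KRep k r} {p : (M.V1 →ₗ[k] N.V1) × (M.V2 →ₗ[k] N.V2)}
    (hp : p ∈ KHom M N) (hsurj : Function.Surjective p.2) {U : Submodule k (Fin r → k)}
    (hM : M.rad U = ⊤) : N.rad U = ⊤ := by
  have hle := map_rad_le hp U
  rwa [hM, Submodule.map_top, range_eq_top.2 hsurj, top_le_iff] at hle

theorem finrank_V1_ne_zero_of_rad_eq_top {M : KRep k r} (hM : M.Nonzero)
    {U : Submodule k (Fin r → k)} (hrad : M.rad U = ⊤) : finrank k M.V1 ≠ 0 := by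
  intro h1
  have : Subsingleton M.V1 := finrank_zero_iff.1 h1
  have hx (α : Fin r → k) : M.x α = 0 := Subsingleton.elim _ _
  have hbot : M.rad U = ⊥ := by simp [rad, hx]
  have h2 : finrank k M.V2 = 0 := by rw [← finrank_top, ← hrad, hbot, finrank_bot]
  exact hM.elim (· h1) (· h2)

theorem indecomposable_of_rad_eq_top {M : KRep k r} (h1 : finrank k M.V1 = 1)
    {U : Submodule k (Fin r → k)} (hrad : M.rad U = ⊤) : M.Indecomposable := by
  refine ⟨Or.inl (by simp [h1]), ?_⟩
  rintro A B hA hB ⟨e₁, e₂, he⟩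
  have hsum : (A.sum B).rad U = ⊤ :=
    rad_eq_top_of_surjective (p := (e₁.toLinearMap, e₂.toLinearMap)) he e₂.surjective hrad
  have hA1 : finrank k A.V1 ≠ 0 := finrank_V1_ne_zero_of_rad_eq_top hA <|
    rad_eq_top_of_surjective (p := (fst k A.V1 B.V1, fst k A.V2 B.V2)) (fun _ ↦ rfl)
      Prod.fst_surjective hsum
  have hB1 : finrank k B.V1 ≠ 0 := finrank_V1_ne_zero_of_rad_eq_top hB <|
    rad_eq_top_of_surjective (p := (snd k A.V1 B.V1, snd k A.V2 B.V2)) (fun _ ↦ rfl)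
      Prod.snd_surjective hsum
  have hadd : finrank k M.V1 = finrank k A.V1 + finrank k B.V1 :=
    e₁.finrank_eq.trans (finrank_prod (R := k) (M := A.V1) (M' := B.V1))
  omega

/-- The subrepresentation `(M₁, R)` of `M`, for a subspace `R ⊆ M₂` containing the images of the
structure maps. -/
def restrictV2 (M : KRep k r) (R : Submodule k M.V2) (hR : ∀ i m, M.f i m ∈ R) : KRep k r where
  V1 := M.V1
  V2 := R
  f i := (M.f i).codRestrict R (hR i)

/-- The representation `(0, V)` concentrated in the second vertex. -/
def concentratedV2 (r : ℕ) (V : Type u) [AddCommGroup V] [Module k V] [FiniteDimensional k V] :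
    KRep k r where
  V1 := PUnit
  V2 := V
  f _ := 0

theorem kIso_restrictV2_sum_concentratedV2 (M : KRep k r) {R C : Submodule k M.V2}
    (hR : ∀ i m, M.f i m ∈ R) (hC : IsCompl R C) :
    KIso M ((M.restrictV2 R hR).sum (concentratedV2 r C)) := by
  refine ⟨(LinearEquiv.prodUnique (R := k) (M₂ := PUnit.{u + 1})).symm,
    (Submodule.prodEquivOfIsCompl R C hC).symm, fun i ↦ LinearMap.ext fun m ↦ ?_⟩
  exact Submodule.prodEquivOfIsCompl_symm_apply_left R C hC ⟨M.f i m, hR i m⟩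

theorem Indecomposable.rad_top_eq_top {M : KRep k r} (hM : M.Indecomposable)
    (h1 : finrank k M.V1 ≠ 0) : M.rad ⊤ = ⊤ := by
  by_contra hne
  have hf (i : Fin r) (m : M.V1) : M.f i m ∈ M.rad ⊤ :=
    M.range_x_le_rad (Submodule.mem_top (x := Pi.single i 1)) ⟨m, by rw [x_single]⟩
  obtain ⟨C, hC⟩ := (M.rad ⊤).exists_isCompl
  have hC0 : finrank k C ≠ 0 := fun h0 ↦
    hne (eq_top_of_isCompl_bot (Submodule.finrank_eq_zero.1 h0 ▸ hC))
  exact hM.2 (M.restrictV2 _ hf) (concentratedV2 r C) (Or.inl h1) (Or.inr hC0)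
    (M.kIso_restrictV2_sum_concentratedV2 hf hC)

/-- The map `k^r → M₂`, `α ↦ x^M_α(m)`, attached to an element `m ∈ M₁`. -/
def evalAt (M : KRep k r) (m : M.V1) : (Fin r → k) →ₗ[k] M.V2 :=
  Fintype.linearCombination k fun i ↦ M.f i m

theorem evalAt_apply (M : KRep k r) (m : M.V1) (α : Fin r → k) : M.evalAt m α = M.x α m := by
  simp [evalAt, x, Fintype.linearCombination_apply]

theorem evalAt_single (M : KRep k r) (m : M.V1) (i : Fin r) :
    M.evalAt m (Pi.single i 1) = M.f i m := by
  rw [evalAt_apply, x_single]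

theorem map_evalAt_eq_rad (M : KRep k r) {m : M.V1} (hm : ∀ n : M.V1, ∃ a : k, a • m = n)
    (U : Submodule k (Fin r → k)) : U.map (M.evalAt m) = M.rad U := by
  apply le_antisymm
  · rintro _ ⟨α, hα, rfl⟩
    exact M.range_x_le_rad hα ⟨m, (M.evalAt_apply m α).symm⟩
  · refine iSup₂_le fun α hα ↦ ?_
    rintro _ ⟨n, rfl⟩
    obtain ⟨a, rfl⟩ := hm n
    rw [map_smul, ← evalAt_apply]
    exact Submodule.smul_mem _ a (Submodule.mem_map_of_mem hα)

theorem Indecomposable.range_evalAt {M : KRep k r} (hM : M.Indecomposable) {m : M.V1}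
    (hm0 : m ≠ 0) (hm : ∀ n : M.V1, ∃ a : k, a • m = n) : range (M.evalAt m) = ⊤ := by
  have : Nontrivial M.V1 := nontrivial_of_ne m 0 hm0
  rw [range_eq_map, M.map_evalAt_eq_rad hm, hM.rad_top_eq_top finrank_pos.ne']

end KRep

namespace XU

theorem finrank_V2 (U : Submodule k (Fin r → k)) : finrank k (XU U).V2 = r - finrank k U :=
  U.finrank_quotient.trans (by rw [finrank_fin_fun])

theorem f_one (U : Submodule k (Fin r → k)) (i : Fin r) :
    (XU U).f i (1 : k) = U.mkQ (Pi.single i 1) :=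
  toSpanSingleton_apply_one k ((Fin r → k) ⧸ U) _

theorem evalAt_one (U : Submodule k (Fin r → k)) : (XU U).evalAt (1 : k) = U.mkQ :=
  LinearMap.pi_ext' fun i ↦ LinearMap.ext_ring <|
    ((XU U).evalAt_single (1 : k) i).trans (f_one U i)

theorem rad_top (U : Submodule k (Fin r → k)) : (XU U).rad ⊤ = ⊤ := by
  have hspan (a : (XU U).V1) : ∃ b : k, b • (1 : k) = a := ⟨a, mul_one (M := k) a⟩
  rw [← (XU U).map_evalAt_eq_rad hspan, Submodule.map_top, evalAt_one]
  exact U.range_mkQ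

theorem indecomposable (U : Submodule k (Fin r → k)) : (XU U).Indecomposable :=
  KRep.indecomposable_of_rad_eq_top (finrank_self k) (rad_top U)

theorem toSpanSingleton_liftQ_mem_KHom {M : KRep k r} {U : Submodule k (Fin r → k)} {m : M.V1}
    (hU : U ≤ ker (M.evalAt m)) :
    (toSpanSingleton k M.V1 m, U.liftQ (M.evalAt m) hU) ∈ KHom (XU U) M := by
  refine fun i ↦ LinearMap.ext_ring ?_
  calc U.liftQ (M.evalAt m) hU ((XU U).f i (1 : k))
      = U.liftQ (M.evalAt m) hU (U.mkQ (Pi.single i 1)) := by rw [f_one]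
    _ = M.f i m := by rw [Submodule.mkQ_apply, Submodule.liftQ_apply, KRep.evalAt_single]
    _ = M.f i (toSpanSingleton k M.V1 m 1) := by rw [toSpanSingleton_apply_one]

end XU

/-- Let `1 ≤ c ≤ d < r` and let `M` be an indecomposable representation
of `Γ_r` with dimension vector `(1, r−d)`. Then there exist an indecomposable
representation `N` of `Γ_r` with dimension vector `(1, r−c)` and a surjective morphism
`π : N → M` (both components surjective). -/
theorem exists_indecomposable_epi (c d : ℕ) (hc : 1 ≤ c) (hcd : c ≤ d) (hdr : d < r)
    (M : KRep k r) (hind : M.Indecomposable)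
    (h1 : finrank k M.V1 = 1) (h2 : finrank k M.V2 = r - d) :
    ∃ N : KRep k r, N.Indecomposable ∧ finrank k N.V1 = 1 ∧ finrank k N.V2 = r - c ∧
      ∃ p ∈ KHom N M, Function.Surjective p.1 ∧ Function.Surjective p.2 := by
  obtain ⟨m, hm0, hm⟩ := finrank_eq_one_iff'.1 h1
  have hrange : range (M.evalAt m) = ⊤ := hind.range_evalAt hm0 hm
  have hker : finrank k (ker (M.evalAt m)) = d := by
    have hrank := (M.evalAt m).finrank_range_add_finrank_ker
    rw [hrange, finrank_top, h2, finrank_fin_fun] at hrank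
    omega
  obtain ⟨U, hU, rfl⟩ := exists_submodule_le_finrank_eq (ker (M.evalAt m)) (hcd.trans hker.ge)
  exact ⟨XU U, XU.indecomposable U, finrank_self k, XU.finrank_V2 U, _,
    XU.toSpanSingleton_liftQ_mem_KHom hU, hm, range_eq_top.1 ((U.range_liftQ _ hU).trans hrange)⟩
end

section
/- Let 1 ≤ d < r and let U ∈ Gr_{d,r}. Then every nonzero quotient of X_U is indecomposable; that is, for every subrepresentation W ⊊ X_U, the quotient representation X_U/W is indecomposable. -/
open Module LinearMap

universe u

variable {k : Type u} [Field k] {r : ℕ}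

/-- The subrepresentation of `M` given by compatible subspaces `W₁ ⊆ M₁`, `W₂ ⊆ M₂`,
viewed as a representation. -/
def KRep.subRep (M : KRep k r) (W1 : Submodule k M.V1) (W2 : Submodule k M.V2)
    (h : ∀ i, W1 ≤ W2.comap (M.f i)) : KRep k r where
  V1 := W1
  V2 := W2
  f := fun i => (M.f i).restrict (fun _ hx => h i hx)

/-- The quotient representation `M/W` for compatible subspaces `W₁ ⊆ M₁`, `W₂ ⊆ M₂`. -/
def KRep.quotRep (M : KRep k r) (W1 : Submodule k M.V1) (W2 : Submodule k M.V2)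
    (h : ∀ i, W1 ≤ W2.comap (M.f i)) : KRep k r where
  V1 := M.V1 ⧸ W1
  V2 := M.V2 ⧸ W2
  f := fun i => Submodule.mapQ W1 W2 (M.f i) (h i)

/-!
Call a representation generated by `M₁` if the images of the structure maps span `M₂`. This property
passes to quotients, in particular to direct summands, and a nonzero representation having it
satisfies `M₁ ≠ 0`. Hence, if moreover `dim M₁ ≤ 1`, two nonzero direct summands would each
contribute at least one dimension to `M₁`. Quotients of `X_U` inherit both conditions from `X_U`.
-/

namespace KRep

variable {M N A B : KRep k r}

/-- `M` is generated, as a representation, by its component `M₁`: the images of the structure maps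
`M(γᵢ)` span `M₂`. -/
def IsGeneratedByV1 (M : KRep k r) : Prop :=
  ⨆ i, range (M.f i) = ⊤

theorem IsGeneratedByV1.of_surjective (hM : M.IsGeneratedByV1)
    {φ : (M.V1 →ₗ[k] N.V1) × (M.V2 →ₗ[k] N.V2)} (hφ : φ ∈ KHom M N)
    (hsurj : Function.Surjective φ.2) : N.IsGeneratedByV1 := by
  refine top_le_iff.mp ?_
  calc ⊤ = (⨆ i, range (M.f i)).map φ.2 := by
        rw [hM, Submodule.map_top, range_eq_top.mpr hsurj]
    _ = ⨆ i, range (N.f i ∘ₗ φ.1) := by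
        simp only [Submodule.map_iSup, ← range_comp, hφ _]
    _ ≤ ⨆ i, range (N.f i) := iSup_mono fun i => range_comp_le_range φ.1 (N.f i)

theorem mkQ_mem_KHom_quotRep (W1 : Submodule k M.V1) (W2 : Submodule k M.V2)
    (h : ∀ i, W1 ≤ W2.comap (M.f i)) : (W1.mkQ, W2.mkQ) ∈ KHom M (M.quotRep W1 W2 h) :=
  fun i => (Submodule.mapQ_mkQ W1 W2 (M.f i) (h := h i)).symm

theorem IsGeneratedByV1.quotRep (hM : M.IsGeneratedByV1) (W1 : Submodule k M.V1)
    (W2 : Submodule k M.V2) (h : ∀ i, W1 ≤ W2.comap (M.f i)) :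
    (M.quotRep W1 W2 h).IsGeneratedByV1 :=
  hM.of_surjective (mkQ_mem_KHom_quotRep W1 W2 h) W2.mkQ_surjective

theorem IsGeneratedByV1.of_kIso (hM : M.IsGeneratedByV1) (hMN : KIso M N) :
    N.IsGeneratedByV1 := by
  obtain ⟨e1, e2, he⟩ := hMN
  exact hM.of_surjective (φ := (e1, e2)) he e2.surjective

theorem IsGeneratedByV1.of_sum_left (hAB : (A.sum B).IsGeneratedByV1) : A.IsGeneratedByV1 :=
  hAB.of_surjective (φ := (fst k A.V1 B.V1, fst k A.V2 B.V2)) (fun _ => rfl) fst_surjective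

theorem IsGeneratedByV1.of_sum_right (hAB : (A.sum B).IsGeneratedByV1) : B.IsGeneratedByV1 :=
  hAB.of_surjective (φ := (snd k A.V1 B.V1, snd k A.V2 B.V2)) (fun _ => rfl) snd_surjective

theorem not_nonzero_iff : ¬ M.Nonzero ↔ Subsingleton M.V1 ∧ Subsingleton M.V2 := by
  simp only [Nonzero, not_or, not_not, finrank_zero_iff]

theorem IsGeneratedByV1.finrank_V1_pos (hM : M.IsGeneratedByV1) (hM0 : M.Nonzero) :
    0 < finrank k M.V1 := by
  contrapose! hM0
  have hV1 : Subsingleton M.V1 := finrank_zero_iff.mp (Nat.le_zero.mp hM0)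
  have hbot : (⊥ : Submodule k M.V2) = ⊤ := by
    rw [← hM, eq_comm, iSup_eq_bot]
    exact fun i => range_eq_bot.mpr (Subsingleton.elim _ _)
  have hV2 : Subsingleton M.V2 :=
    (Submodule.subsingleton_iff k).mp (subsingleton_of_bot_eq_top hbot)
  exact not_nonzero_iff.mpr ⟨hV1, hV2⟩

theorem finrank_V1_eq_add_of_kIso_sum (hM : KIso M (A.sum B)) :
    finrank k M.V1 = finrank k A.V1 + finrank k B.V1 := by
  obtain ⟨e1, -⟩ := hM
  exact e1.finrank_eq.trans finrank_prod

theorem IsGeneratedByV1.indecomposable (hM : M.IsGeneratedByV1) (hM0 : M.Nonzero)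
    (hV1 : finrank k M.V1 ≤ 1) : M.Indecomposable := by
  refine ⟨hM0, fun A B hA0 hB0 hiso => ?_⟩
  have hAB : (A.sum B).IsGeneratedByV1 := hM.of_kIso hiso
  have hA : 0 < finrank k A.V1 := hAB.of_sum_left.finrank_V1_pos hA0
  have hB : 0 < finrank k B.V1 := hAB.of_sum_right.finrank_V1_pos hB0
  have hadd := finrank_V1_eq_add_of_kIso_sum hiso
  lia

theorem quotRep_nonzero {W1 : Submodule k M.V1} {W2 : Submodule k M.V2}
    (h : ∀ i, W1 ≤ W2.comap (M.f i)) (hproper : ¬ (W1 = ⊤ ∧ W2 = ⊤)) :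
    (M.quotRep W1 W2 h).Nonzero := by
  contrapose! hproper
  exact (not_nonzero_iff.mp hproper).imp Submodule.Quotient.subsingleton_iff.mp
    Submodule.Quotient.subsingleton_iff.mp

end KRep

theorem XU_isGeneratedByV1 (U : Submodule k (Fin r → k)) : (XU U).IsGeneratedByV1 := by
  calc ⨆ i, range (toSpanSingleton k _ (U.mkQ (Pi.single i 1)))
      = (⨆ i, k ∙ (Pi.single i 1 : Fin r → k)).map U.mkQ := by
        simp only [range_toSpanSingleton, Submodule.map_iSup, Submodule.map_span,
          Set.image_singleton]
    _ = ⊤ := by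
        simp only [← Submodule.span_range_eq_iSup, ← Pi.basisFun_apply, Basis.span_eq,
          Submodule.map_top, Submodule.range_mkQ]

/-- Let `1 ≤ d < r` and `U ∈ Gr_{d,r}`. Then every nonzero quotient of
`X_U` is indecomposable: for every subrepresentation `W ⊊ X_U`, the quotient `X_U/W` is
indecomposable. -/
theorem quot_XU_indecomposable (d : ℕ) (hd : 1 ≤ d) (hdr : d < r)
    (U : Submodule k (Fin r → k)) (hU : finrank k U = d)
    (W1 : Submodule k (XU U).V1) (W2 : Submodule k (XU U).V2)
    (h : ∀ i, W1 ≤ W2.comap ((XU U).f i)) (hproper : ¬ (W1 = ⊤ ∧ W2 = ⊤)) :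
    ((XU U).quotRep W1 W2 h).Indecomposable := by
  have hV1 : finrank k ((XU U).V1 ⧸ W1) ≤ 1 :=
    (Submodule.finrank_quotient_le W1).trans_eq (finrank_self k)
  exact ((XU_isGeneratedByV1 U).quotRep W1 W2 h).indecomposable
    (KRep.quotRep_nonzero h hproper) hV1
end

section
/- Let 1 ≤ d ≤ r−2 and let M be a representation of Γ_r. If M has the equal d-socle property then M has the equal (d+1)-socle property, and if M has the equal d-radical property then M has the equal (d+1)-radical property. In particular ESP₁ ⊆ ESP₂ ⊆ … ⊆ ESP_{r−1} and ERP₁ ⊆ ERP₂ ⊆ … ⊆ ERP_{r−1}. -/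
/-!
Every vector of a subspace `U` with `dim U ≥ d ≥ 1` lies in a `d`-dimensional subspace of `U`.
So `Rad_U(M)`, the sum of the images of `x^M_u` for `u ∈ U`, is the sum of the `Rad_W(M)` over the
`d`-dimensional `W ≤ U`; if these all coincide with one subspace, so does `Rad_U(M)`. Socles are
the same argument in the order dual, with kernels and intersections in place of images and sums.
-/

open Module LinearMap

universe u

variable {k : Type u} [Field k] {r : ℕ}

section EqualOnDimension

variable {K V : Type*} [DivisionRing K] [AddCommGroup V] [Module K V] [FiniteDimensional K V]
  {d : ℕ} {U : Submodule K V}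

theorem exists_between_finrank_eq {W₀ : Submodule K V} (hle : W₀ ≤ U)
    (hW₀ : finrank K W₀ ≤ d) (hU : d ≤ finrank K U) :
    ∃ W : Submodule K V, W₀ ≤ W ∧ W ≤ U ∧ finrank K W = d := by
  induction d, hW₀ using Nat.le_induction with
  | base => exact ⟨W₀, le_rfl, hle, rfl⟩
  | succ n _ ih =>
    obtain ⟨W, hW₀W, hWU, rfl⟩ := ih (Nat.le_of_succ_le hU)
    have hlt : W < U := hWU.lt_of_ne (by rintro rfl; omega)
    obtain ⟨v, hvU, hvW⟩ := SetLike.exists_of_lt hlt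
    refine ⟨W ⊔ Submodule.span K {v}, hW₀W.trans le_sup_left, sup_le hWU ?_, ?_⟩
    · exact (Submodule.span_singleton_le_iff_mem v U).2 hvU
    · exact Submodule.finrank_sup_span_singleton hvW

theorem exists_mem_le_finrank_eq (hd : 1 ≤ d) (hU : d ≤ finrank K U) {u : V} (hu : u ∈ U) :
    ∃ W : Submodule K V, u ∈ W ∧ W ≤ U ∧ finrank K W = d := by
  have hspan : finrank K (Submodule.span K {u}) ≤ 1 :=
    (finrank_span_le_card {u}).trans_eq (by simp)
  obtain ⟨W, huW, hWU, hW⟩ := exists_between_finrank_eq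
    ((Submodule.span_singleton_le_iff_mem u U).2 hu) (hspan.trans hd) hU
  exact ⟨W, (Submodule.span_singleton_le_iff_mem u W).1 huW, hWU, hW⟩

variable {L : Type*} [CompleteLattice L] {φ : V → L} {U' : Submodule K V}

theorem biSup_le_biSup_of_le_finrank (hd : 1 ≤ d)
    (h : ∀ W W' : Submodule K V, finrank K W = d → finrank K W' = d →
      ⨆ w ∈ W, φ w = ⨆ w ∈ W', φ w)
    (hU : d ≤ finrank K U) (hU' : d ≤ finrank K U') :
    ⨆ u ∈ U, φ u ≤ ⨆ u ∈ U', φ u := by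
  obtain ⟨W', -, hWU', hW'⟩ := exists_mem_le_finrank_eq hd hU' U'.zero_mem
  refine iSup₂_le fun u hu => ?_
  obtain ⟨W, huW, -, hW⟩ := exists_mem_le_finrank_eq hd hU hu
  calc φ u ≤ ⨆ w ∈ W, φ w := le_biSup φ huW
    _ = ⨆ w ∈ W', φ w := h W W' hW hW'
    _ ≤ ⨆ u ∈ U', φ u := biSup_mono fun _ hw => hWU' hw

theorem biSup_eq_biSup_of_le_finrank (hd : 1 ≤ d)
    (h : ∀ W W' : Submodule K V, finrank K W = d → finrank K W' = d →
      ⨆ w ∈ W, φ w = ⨆ w ∈ W', φ w)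
    (hU : d ≤ finrank K U) (hU' : d ≤ finrank K U') :
    ⨆ u ∈ U, φ u = ⨆ u ∈ U', φ u :=
  le_antisymm (biSup_le_biSup_of_le_finrank hd h hU hU')
    (biSup_le_biSup_of_le_finrank hd h hU' hU)

theorem biInf_eq_biInf_of_le_finrank (hd : 1 ≤ d)
    (h : ∀ W W' : Submodule K V, finrank K W = d → finrank K W' = d →
      ⨅ w ∈ W, φ w = ⨅ w ∈ W', φ w)
    (hU : d ≤ finrank K U) (hU' : d ≤ finrank K U') :
    ⨅ u ∈ U, φ u = ⨅ u ∈ U', φ u :=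
  biSup_eq_biSup_of_le_finrank (L := Lᵒᵈ) hd h hU hU'

end EqualOnDimension

namespace KRep

variable {M : KRep k r} {d e : ℕ}

theorem soc_eq_soc_iff {U V : Submodule k (Fin r → k)} :
    M.soc U = M.soc V ↔ M.socKer U = M.socKer V := by
  simp only [soc, ← Submodule.comap_fst]
  exact (Submodule.comap_injective_of_surjective fst_surjective).eq_iff

theorem ESP.mono (hd : 1 ≤ d) (hde : d ≤ e) (h : M.ESP d) : M.ESP e := by
  simp only [ESP, soc_eq_soc_iff] at h ⊢
  exact fun U V hU hV =>
    biInf_eq_biInf_of_le_finrank hd h (hde.trans_eq hU.symm) (hde.trans_eq hV.symm)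

theorem ERP.mono (hd : 1 ≤ d) (hde : d ≤ e) (h : M.ERP d) : M.ERP e := fun _ _ hU hV =>
  biSup_eq_biSup_of_le_finrank hd h (hde.trans_eq hU.symm) (hde.trans_eq hV.symm)

end KRep

/-- Let `1 ≤ d ≤ r − 2` and `M` a representation of `Γ_r`. If `M` has
the equal `d`-socle property then it has the equal `(d+1)`-socle property, and if it has
the equal `d`-radical property then it has the equal `(d+1)`-radical property.
In particular `ESP₁ ⊆ ESP₂ ⊆ … ⊆ ESP_{r−1}` and `ERP₁ ⊆ ERP₂ ⊆ … ⊆ ERP_{r−1}`. -/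
theorem esp_erp_mono (d : ℕ) (hd : 1 ≤ d) (hdr : d + 2 ≤ r) (M : KRep k r) :
    (KRep.ESP d M → KRep.ESP (d + 1) M) ∧ (KRep.ERP d M → KRep.ERP (d + 1) M) :=
  ⟨KRep.ESP.mono hd d.le_succ, KRep.ERP.mono hd d.le_succ⟩
end
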